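/- Each point $T_j - 1$ is a local minimum of the total cost function (refinement of Proposition 4). Let $C_{insp} : \mathbb{N} \to \mathbb{R}$ be strictly antitone, $N \ge 1$, $T : \mathrm{Fin}\, N \to \mathbb{N}$ strictly monotone, $n : \mathrm{Fin}\, N \to \mathbb{N}$, $C_{rep}, C_{out} : \mathbb{N} \to \mathbb{R}$, and $F(s) = C_{insp}(s) + \sum_{i : T_i \le s} \big(n_i\, C_{rep}(T_i) + C_{out}(T_i)\big)$. Fix $j \in \mathrm{Fin}\, N$ with $T_j \ge 2$, suppose no deadline $T_i$ satisfies $T_j - 2 < T_i \le T_j - 1$, and suppose the jump at $T_j$ exceeds the inspection-cost decrement: $n_j\, C_{rep}(T_j) + C_{out}(T_j) > C_{insp}(T_j - 1) - C_{insp}(T_j)$. Then $F(T_j - 1) < F(T_j - 2)$ and $F(T_j - 1) < F(T_j)$. -/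

import Mathlib

open Finset

section StepFunction

variable {ι α M : Type*} [Fintype ι] [LinearOrder α]

/-- The step function of the total cost: the accumulated jumps `jump i` over all deadlines `T i`
that have been reached at time `s`. -/
def stepSum [AddCommMonoid M] (T : ι → α) (jump : ι → M) (s : α) : M :=
  ∑ i with T i ≤ s, jump i

/-- The total cost of an inspection at time `s`, for inspection cost `C` and a schedule with
deadlines `T`. The paper's `n i * C_rep (T i) + C_out (T i)` is the single term `jump i`. -/
def totalCost [AddCommMonoid M] (C : α → M) (T : ι → α) (jump : ι → M) (s : α) : M :=
  C s + stepSum T jump s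

section AddCommMonoid

variable [AddCommMonoid M] {T : ι → α} {jump : ι → M} {a b : α}

theorem stepSum_add_sum_Ioc (hab : a ≤ b) :
    stepSum T jump a + ∑ i with T i ∈ Set.Ioc a b, jump i = stepSum T jump b := by
  classical
  have hdisj : Disjoint ({i | T i ≤ a} : Finset ι) ({i | T i ∈ Set.Ioc a b} : Finset ι) :=
    disjoint_filter.2 fun _ _ hle hmem => hle.not_gt hmem.1
  rw [stepSum, stepSum, ← sum_union hdisj, ← filter_or]
  simp only [← Set.mem_Iic, ← Set.mem_union, Set.Iic_union_Ioc_eq_Iic hab]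

theorem stepSum_eq_of_forall_notMem_Ioc (hab : a ≤ b) (hgap : ∀ i, T i ∉ Set.Ioc a b) :
    stepSum T jump b = stepSum T jump a := by
  rw [← stepSum_add_sum_Ioc hab, filter_false_of_mem fun i _ => hgap i, sum_empty, add_zero]

theorem stepSum_apply_of_covBy (hT : Function.Injective T) {j : ι} (ha : a ⋖ T j) :
    stepSum T jump (T j) = stepSum T jump a + jump j := by
  classical
  have hfilter : ({i | T i ∈ Set.Ioc a (T j)} : Finset ι) = {j} := by
    ext i
    simp only [ha.Ioc_eq, Set.mem_singleton_iff, hT.eq_iff, mem_filter_univ, mem_singleton]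
  rw [← stepSum_add_sum_Ioc ha.le, hfilter, sum_singleton]

end AddCommMonoid

variable [AddCommGroup M] [PartialOrder M] [IsOrderedAddMonoid M]
  {C : α → M} {T : ι → α} {jump : ι → M} {a b : α}

theorem totalCost_lt_of_forall_notMem_Ioc (hC : StrictAnti C) (hab : a < b)
    (hgap : ∀ i, T i ∉ Set.Ioc a b) : totalCost C T jump b < totalCost C T jump a := by
  rw [totalCost, totalCost, stepSum_eq_of_forall_notMem_Ioc hab.le hgap]
  gcongr
  exact hC hab

theorem totalCost_lt_apply_of_covBy (hT : Function.Injective T) {j : ι} (ha : a ⋖ T j)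
    (hjump : C a - C (T j) < jump j) : totalCost C T jump a < totalCost C T jump (T j) :=
  calc C a + stepSum T jump a
    _ < C (T j) + jump j + stepSum T jump a := by
      gcongr
      exact sub_lt_iff_lt_add'.1 hjump
    _ = C (T j) + stepSum T jump (T j) := by
      rw [stepSum_apply_of_covBy hT ha, add_assoc, add_comm (jump j)]

theorem deadline_minus_one_is_local_min_general (hC : StrictAnti C) (hT : Function.Injective T)
    {j : ι} (hab : a < b) (hb : b ⋖ T j) (hgap : ∀ i, T i ∉ Set.Ioc a b)
    (hjump : C b - C (T j) < jump j) :
    totalCost C T jump b < totalCost C T jump a ∧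
      totalCost C T jump b < totalCost C T jump (T j) :=
  ⟨totalCost_lt_of_forall_notMem_Ioc hC hab hgap, totalCost_lt_apply_of_covBy hT hb hjump⟩

end StepFunction

/-- Refinement of Proposition 4: each point `T j - 1` is a local minimum of the
total cost function `F`, provided the jump of the step part at `T j` exceeds
the decrement of the inspection cost. -/
theorem deadline_minus_one_is_local_min
    (Cinsp : ℕ → ℝ) (hCinsp : StrictAnti Cinsp)
    (N : ℕ) (hN : 1 ≤ N) (T : Fin N → ℕ) (hT : StrictMono T)
    (n : Fin N → ℕ) (Crep Cout : ℕ → ℝ) (F : ℕ → ℝ)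
    (hF : ∀ s : ℕ, F s = Cinsp s +
      ∑ i ∈ Finset.univ.filter (fun i : Fin N => T i ≤ s),
        ((n i : ℝ) * Crep (T i) + Cout (T i)))
    (j : Fin N) (hTj : 2 ≤ T j)
    (hgap : ∀ i : Fin N, ¬(T j - 2 < T i ∧ T i ≤ T j - 1))
    (hjump : (n j : ℝ) * Crep (T j) + Cout (T j) > Cinsp (T j - 1) - Cinsp (T j)) :
    F (T j - 1) < F (T j - 2) ∧ F (T j - 1) < F (T j) := by
  obtain rfl : F = totalCost Cinsp T (fun i => n i * Crep (T i) + Cout (T i)) := funext hF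
  exact deadline_minus_one_is_local_min_general hCinsp hT.injective (by lia)
    (Nat.covBy_iff_add_one_eq.2 (by lia)) hgap hjump
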